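/- Suppose the symmetric matrix P_SOS and the positive semidefinite symmetric matrix Q satisfy: aᵀP_SOSa ≥ εaᵀa for all a ∈ ℝⁿ, and 2aᵀP_SOS(La + Υ(a)) + (δ² − aᵀa)aᵀQa + εaᵀa ≤ 0 for all a ∈ ℝⁿ. Then for every p ∈ [1,∞), every initial condition with ‖a₀‖ ≤ δ_{f,SOS} = δ√(λmin(P_SOS)/λmax(P_SOS)), every continuous input f with sup_{0≤t≤τ} ‖f(t)‖ ≤ f_SOS = λmin(P_SOS)εδ/(λmax(P_SOS)‖2P_SOS‖), and every continuously differentiable solution a : [0,τ] → ℝⁿ of ȧ(t) = La(t) + Υ(a(t)) + f(t) with a(0) = a₀ and output y(t) = a(t), the truncated output satisfies ‖y_τ‖_{Lp} ≤ γ_SOS‖f_τ‖_{Lp} + β_SOS, where γ_SOS = λmax(P_SOS)‖2P_SOS‖/(λmin(P_SOS)ε) and β_SOS = ‖a₀‖√(λmax(P_SOS)/λmin(P_SOS)) · (2λmax(P_SOS)/(εp))^{1/p}. -/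

import Mathlib

/-!
Let `c₁ = λmin(P)`, `c₂ = λmax(P)`, `b = ‖2P‖`, and take the Lyapunov function `V = aᵀPa`, so that
`c₁‖a‖² ≤ V ≤ c₂‖a‖²`. Along a solution the certificate gives
`V' ≤ -ε‖a‖² + b‖a‖‖f‖ + (‖a‖² - δ²) aᵀQa`.

*Invariance.* The data satisfy `V(0) ≤ c₁δ²`. Where `V > c₁δ²` the smallness of `f` makes
`-ε‖a‖² + b‖a‖‖f‖ ≤ 0`, and `‖a‖² - δ² ≤ (V - c₁δ²)/c₁`; as `aᵀQa` is bounded on the compact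
trajectory, `(V - c₁δ²)' ≤ K (V - c₁δ²)` there, and `nonpos_of_deriv_le` yields `V ≤ c₁δ²`, hence
`‖a‖ ≤ δ`, on all of `[0, τ]`.

*Decay.* Now the `Q`-term can be dropped, and with `k = ε/(2c₂)` and `g = b‖f‖/(2√c₁)` one has
`V' ≤ -2kV + 2g√V`. By `sqrt_le_of_deriv_le`, `√V ≤ √V(0) e^{-kt} + h` where `h' = -kh + g` and
`h(0) = 0`.

*`L^p` bound.* `Lp_bound` combines Minkowski's inequality, a direct computation for the
exponential, and `k‖h‖ ≤ ‖g‖`. The last follows by integrating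
`(h^p)' = p h^(p-1) (g - kh) ≤ k ((g/k)^p - h^p)`, which is Young's inequality for products.
Dividing by `√c₁` gives the stated constants.
-/

noncomputable section

open Matrix Set MeasureTheory

/-- Euclidean norm on `Fin n → ℝ`. -/
def eNorm {n : ℕ} (a : Fin n → ℝ) : ℝ := Real.sqrt (∑ i, a i ^ 2)

/-- Truncation of a signal: equals `g` on `(-∞, τ]` (in particular on `[0, τ]`) and `0` for `t > τ`. -/
def trunc {E : Type*} [Zero E] (τ : ℝ) (g : ℝ → E) : ℝ → E := fun t => if t ≤ τ then g t else 0

/-- The `L∞` norm of a vector-valued signal on `[0, ∞)`: `sup_{t ≥ 0} ‖g t‖`. -/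
def eLinf {n : ℕ} (g : ℝ → Fin n → ℝ) : ℝ := ⨆ t : Set.Ici (0:ℝ), eNorm (g t.1)

/-- The `Lp` norm of a vector-valued signal on `[0, ∞)`: `(∫₀^∞ ‖g t‖^p dt)^(1/p)`. -/
def eLp {n : ℕ} (p : ℝ) (g : ℝ → Fin n → ℝ) : ℝ :=
  (∫ t in Set.Ioi (0:ℝ), eNorm (g t) ^ p) ^ (1/p)

/-- Smallest eigenvalue of a symmetric matrix, via its Rayleigh quotient characterization. -/
def lamMin {n : ℕ} (P : Matrix (Fin n) (Fin n) ℝ) : ℝ :=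
  sInf {r | ∃ a : Fin n → ℝ, eNorm a = 1 ∧ r = a ⬝ᵥ P.mulVec a}

/-- Largest eigenvalue of a symmetric matrix, via its Rayleigh quotient characterization. -/
def lamMax {n : ℕ} (P : Matrix (Fin n) (Fin n) ℝ) : ℝ :=
  sSup {r | ∃ a : Fin n → ℝ, eNorm a = 1 ∧ r = a ⬝ᵥ P.mulVec a}

/-- Spectral norm of a matrix: the induced Euclidean operator norm. -/
def specNorm {n : ℕ} (M : Matrix (Fin n) (Fin n) ℝ) : ℝ :=
  sSup {r | ∃ a : Fin n → ℝ, eNorm a = 1 ∧ r = eNorm (M.mulVec a)}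

/-- The quadratic nonlinearity `Υ`, with components `Υₘ(a) = aᵀ Rₘ a`. -/
def Ups {n : ℕ} (R : Fin n → Matrix (Fin n) (Fin n) ℝ) (a : Fin n → ℝ) : Fin n → ℝ :=
  fun m => a ⬝ᵥ (R m).mulVec a

/-! ### Euclidean norm, Rayleigh quotients and the spectral norm -/

/-- Cauchy–Schwarz in the notation of the statement. -/
lemma dot_le_eNorm {n : ℕ} (a b : Fin n → ℝ) : a ⬝ᵥ b ≤ eNorm a * eNorm b :=
  Real.sum_mul_le_sqrt_mul_sqrt _ _ _

lemma eNorm_nonneg {n : ℕ} (a : Fin n → ℝ) : 0 ≤ eNorm a := Real.sqrt_nonneg _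

lemma dot_self_eq {n : ℕ} (a : Fin n → ℝ) : a ⬝ᵥ a = eNorm a ^ 2 := by
  rw [eNorm, Real.sq_sqrt (Finset.sum_nonneg fun i _ => sq_nonneg _)]
  simp [dotProduct, sq]

lemma continuous_eNorm {n : ℕ} : Continuous (eNorm (n := n)) := by
  unfold eNorm; fun_prop

lemma eNorm_smul {n : ℕ} (c : ℝ) (hc : 0 ≤ c) (a : Fin n → ℝ) :
    eNorm (c • a) = c * eNorm a := by
  simp only [eNorm, Pi.smul_apply, smul_eq_mul, mul_pow, ← Finset.mul_sum]
  rw [Real.sqrt_mul (sq_nonneg c), Real.sqrt_sq hc]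

lemma eNorm_zero {n : ℕ} : eNorm (0 : Fin n → ℝ) = 0 := by simp [eNorm]

lemma eNorm_eq_zero {n : ℕ} {a : Fin n → ℝ} (h : eNorm a = 0) : a = 0 := by
  have := dot_self_eq a
  rw [h] at this
  exact dotProduct_self_eq_zero.1 (by simpa using this)

/-- Normalisation: every vector is its norm times a unit vector. -/
lemma exists_unit {n : ℕ} {a : Fin n → ℝ} (h : eNorm a ≠ 0) :
    ∃ u : Fin n → ℝ, eNorm u = 1 ∧ a = eNorm a • u := by
  refine ⟨(eNorm a)⁻¹ • a, ?_, ?_⟩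
  · rw [eNorm_smul _ (inv_nonneg.2 (eNorm_nonneg a)), inv_mul_cancel₀ h]
  · rw [smul_smul, mul_inv_cancel₀ h, one_smul]

lemma isCompact_unit {n : ℕ} : IsCompact {a : Fin n → ℝ | eNorm a = 1} := by
  refine Metric.isCompact_of_isClosed_isBounded
    (isClosed_eq continuous_eNorm continuous_const) ?_
  refine (Metric.isBounded_closedBall (x := (0 : Fin n → ℝ)) (r := 1)).subset ?_
  intro a ha
  rw [mem_closedBall_zero_iff, pi_norm_le_iff_of_nonneg zero_le_one]
  intro i
  have h : eNorm a = 1 := ha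
  rw [Real.norm_eq_abs, ← h]
  exact Real.abs_le_sqrt
    (Finset.single_le_sum (f := fun i => a i ^ 2) (fun i _ => sq_nonneg _) (Finset.mem_univ i))

/-- The sets of values whose infimum or supremum is taken are bounded, by compactness of the
unit sphere. -/
lemma isBounded_values {n : ℕ} {φ : (Fin n → ℝ) → ℝ} (hφ : Continuous φ) :
    Bornology.IsBounded {r | ∃ a : Fin n → ℝ, eNorm a = 1 ∧ r = φ a} := by
  refine (isCompact_unit.image hφ).isBounded.subset ?_
  rintro r ⟨a, ha, rfl⟩
  exact ⟨a, ha, rfl⟩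

lemma continuous_quad {n : ℕ} (P : Matrix (Fin n) (Fin n) ℝ) :
    Continuous fun a : Fin n → ℝ => a ⬝ᵥ P.mulVec a := by
  fun_prop

lemma quad_smul {n : ℕ} (P : Matrix (Fin n) (Fin n) ℝ) (c : ℝ) (u : Fin n → ℝ) :
    (c • u) ⬝ᵥ P.mulVec (c • u) = c ^ 2 * (u ⬝ᵥ P.mulVec u) := by
  simp [mulVec_smul, sq, mul_assoc]

lemma lamMin_mul_le {n : ℕ} (P : Matrix (Fin n) (Fin n) ℝ) (a : Fin n → ℝ) :
    lamMin P * eNorm a ^ 2 ≤ a ⬝ᵥ P.mulVec a := by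
  by_cases h : eNorm a = 0
  · simp [eNorm_eq_zero h, eNorm_zero]
  obtain ⟨u, hu, ha⟩ := exists_unit h
  conv_rhs => rw [ha, quad_smul]
  rw [mul_comm]
  exact mul_le_mul_of_nonneg_left
    (csInf_le (isBounded_values (continuous_quad P)).bddBelow ⟨u, hu, rfl⟩) (sq_nonneg _)

lemma le_lamMax_mul {n : ℕ} (P : Matrix (Fin n) (Fin n) ℝ) (a : Fin n → ℝ) :
    a ⬝ᵥ P.mulVec a ≤ lamMax P * eNorm a ^ 2 := by
  by_cases h : eNorm a = 0
  · simp [eNorm_eq_zero h, eNorm_zero]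
  obtain ⟨u, hu, ha⟩ := exists_unit h
  conv_lhs => rw [ha, quad_smul]
  rw [mul_comm (lamMax P)]
  exact mul_le_mul_of_nonneg_left
    (le_csSup (isBounded_values (continuous_quad P)).bddAbove ⟨u, hu, rfl⟩) (sq_nonneg _)

lemma eNorm_mulVec_le {n : ℕ} (M : Matrix (Fin n) (Fin n) ℝ) (a : Fin n → ℝ) :
    eNorm (M.mulVec a) ≤ specNorm M * eNorm a := by
  by_cases h : eNorm a = 0
  · simp [eNorm_eq_zero h, eNorm_zero]
  obtain ⟨u, hu, ha⟩ := exists_unit h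
  conv_lhs => rw [ha, mulVec_smul, eNorm_smul _ (eNorm_nonneg a)]
  rw [mul_comm (specNorm M)]
  refine mul_le_mul_of_nonneg_left (le_csSup
    (isBounded_values (φ := fun a => eNorm (M.mulVec a)) ?_).bddAbove ⟨u, hu, rfl⟩)
    (eNorm_nonneg _)
  exact continuous_eNorm.comp (by fun_prop)

lemma specNorm_nonneg {n : ℕ} (M : Matrix (Fin n) (Fin n) ℝ) : 0 ≤ specNorm M :=
  Real.sSup_nonneg (by rintro r ⟨a, -, rfl⟩; exact eNorm_nonneg _)

lemma exists_eNorm_eq_one {n : ℕ} (hn : n ≠ 0) : ∃ a : Fin n → ℝ, eNorm a = 1 := by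
  refine ⟨Pi.single ⟨0, Nat.pos_of_ne_zero hn⟩ 1, ?_⟩
  have := dot_self_eq (Pi.single (⟨0, Nat.pos_of_ne_zero hn⟩ : Fin n) (1 : ℝ))
  rw [single_dotProduct, Pi.single_eq_same, mul_one] at this
  nlinarith [eNorm_nonneg (Pi.single (⟨0, Nat.pos_of_ne_zero hn⟩ : Fin n) (1 : ℝ))]

lemma le_lamMin {n : ℕ} (hn : n ≠ 0) (P : Matrix (Fin n) (Fin n) ℝ) (ε : ℝ)
    (h : ∀ a : Fin n → ℝ, ε * (a ⬝ᵥ a) ≤ a ⬝ᵥ P.mulVec a) : ε ≤ lamMin P := by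
  obtain ⟨a, ha⟩ := exists_eNorm_eq_one hn
  refine le_csInf ⟨_, a, ha, rfl⟩ ?_
  rintro r ⟨u, hu, rfl⟩
  simpa [dot_self_eq, hu] using h u

lemma lamMin_le_lamMax {n : ℕ} (hn : n ≠ 0) (P : Matrix (Fin n) (Fin n) ℝ) :
    lamMin P ≤ lamMax P := by
  obtain ⟨a, ha⟩ := exists_eNorm_eq_one hn
  simpa [ha] using (lamMin_mul_le P a).trans (le_lamMax_mul P a)

/-! ### Differential inequalities -/

/-- Chain rule for the Lyapunov function `V = aᵀPa`. -/
lemma hasDerivWithinAt_quad {n : ℕ} {P : Matrix (Fin n) (Fin n) ℝ} (hP : Pᵀ = P)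
    {a : ℝ → Fin n → ℝ} {a' : Fin n → ℝ} {s : Set ℝ} {t : ℝ} (h : HasDerivWithinAt a a' s t) :
    HasDerivWithinAt (fun t => a t ⬝ᵥ P.mulVec (a t)) (2 * (a t ⬝ᵥ P.mulVec a')) s t := by
  have hi := hasDerivWithinAt_pi.1 h
  have hPi : ∀ i, HasDerivWithinAt (fun t => P.mulVec (a t) i) (P.mulVec a' i) s t := by
    intro i
    simp only [mulVec, dotProduct]
    exact HasDerivWithinAt.fun_sum fun j _ => (hi j).const_mul _
  have := HasDerivWithinAt.fun_sum (u := Finset.univ) fun i _ => (hi i).mul (hPi i)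
  simp only [Pi.mul_apply] at this
  refine this.congr_deriv ?_
  rw [Finset.sum_add_distrib]
  change a' ⬝ᵥ P.mulVec (a t) + a t ⬝ᵥ P.mulVec a' = _
  have e : a' ⬝ᵥ P.mulVec (a t) = a t ⬝ᵥ P.mulVec a' := by
    rw [dotProduct_mulVec, ← mulVec_transpose, hP, dotProduct_comm]
  rw [e]; ring

/-- Nagumo-type invariance of `{u ≤ 0}`: growth at most linear in `u` where `u > 0` prevents `u`
from becoming positive (compare with `η e^{(K+1)t}` and let `η → 0`). -/
lemma nonpos_of_deriv_le {τ K : ℝ} {u u' : ℝ → ℝ} (hc : ContinuousOn u (Icc 0 τ))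
    (hd : ∀ t ∈ Ico 0 τ, HasDerivWithinAt u (u' t) (Ici t) t) (h0 : u 0 ≤ 0)
    (hb : ∀ t ∈ Ico 0 τ, 0 < u t → u' t ≤ K * u t) : ∀ t ∈ Icc 0 τ, u t ≤ 0 := by
  intro t ht
  have key : ∀ η > 0, u t ≤ η * Real.exp ((K + 1) * t) := by
    intro η hη
    have hB : ∀ x : ℝ, HasDerivAt (fun x => η * Real.exp ((K + 1) * x))
        ((K + 1) * (η * Real.exp ((K + 1) * x))) x := by
      intro x
      have := (((hasDerivAt_id x).const_mul (K + 1)).exp).const_mul η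
      exact this.congr_deriv (by simp; ring)
    refine image_le_of_deriv_right_lt_deriv_boundary hc hd ?_ hB ?_ ht
    · simpa using h0.trans hη.le
    · intro x hx hux
      have hpos : 0 < η * Real.exp ((K + 1) * x) := by positivity
      have := hb x hx (hux ▸ hpos)
      rw [hux] at this
      linarith
  refine le_of_forall_pos_le_add fun ν hν => ?_
  have := key (ν / Real.exp ((K + 1) * t)) (by positivity)
  rw [div_mul_cancel₀ _ (Real.exp_pos _).ne'] at this
  linarith

/-- The response of the scalar system `h' = -k h + g`, `h 0 = 0`, to the input `g`. -/
def resp (k : ℝ) (g : ℝ → ℝ) (t : ℝ) : ℝ :=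
  Real.exp (-k * t) * ∫ s in (0:ℝ)..t, Real.exp (k * s) * g s

lemma resp_zero (k : ℝ) (g : ℝ → ℝ) : resp k g 0 = 0 := by simp [resp]

lemma resp_nonneg {k : ℝ} {g : ℝ → ℝ} (hg : ∀ t, 0 ≤ g t) {t : ℝ} (ht : 0 ≤ t) :
    0 ≤ resp k g t :=
  mul_nonneg (Real.exp_pos _).le (intervalIntegral.integral_nonneg ht fun s _ =>
    mul_nonneg (Real.exp_pos _).le (hg s))

lemma hasDerivAt_exp_neg (k t : ℝ) :
    HasDerivAt (fun t => Real.exp (-k * t)) (-k * Real.exp (-k * t)) t :=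
  (((hasDerivAt_id t).const_mul (-k)).exp).congr_deriv (by simp; ring)

lemma hasDerivAt_resp (k : ℝ) {g : ℝ → ℝ} (hg : Continuous g) (t : ℝ) :
    HasDerivAt (resp k g) (-k * resp k g t + g t) t := by
  have h1 : Continuous fun s => Real.exp (k * s) * g s := by fun_prop
  have h2 := (hasDerivAt_exp_neg k t).mul
    (h1.integral_hasStrictDerivAt 0 t).hasDerivAt
  refine h2.congr_deriv ?_
  have : Real.exp (-k * t) * Real.exp (k * t) = 1 := by rw [← Real.exp_add]; simp
  rw [resp, ← mul_assoc (Real.exp (-k * t)) (Real.exp (k * t)), this]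
  ring

/-- Comparison for the Lyapunov function: `V' ≤ -2kV + 2g√V` yields the variation-of-constants
bound for `√V`. Comparing `V` with `(w e^{-kt} + h + η)²`, where `h = resp k g` and `η > 0`,
avoids differentiating the square root at `0`. -/
lemma sqrt_le_of_deriv_le {τ k w : ℝ} (hk : 0 < k) (hw : 0 ≤ w) {V V' g : ℝ → ℝ}
    (hg : Continuous g) (hg0 : ∀ t, 0 ≤ g t) (hc : ContinuousOn V (Icc 0 τ))
    (hd : ∀ t ∈ Ico 0 τ, HasDerivWithinAt V (V' t) (Ici t) t) (h0 : V 0 ≤ w ^ 2)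
    (hb : ∀ t ∈ Ico 0 τ, V' t ≤ -2 * k * V t + 2 * g t * Real.sqrt (V t)) :
    ∀ t ∈ Icc 0 τ, Real.sqrt (V t) ≤ w * Real.exp (-k * t) + resp k g t := by
  intro t ht
  refine le_of_forall_pos_le_add fun η hη => ?_
  set Z : ℝ → ℝ := fun t => w * Real.exp (-k * t) + resp k g t + η with hZ
  have hZpos : ∀ x, 0 ≤ x → 0 < Z x := fun x hx => by
    have := resp_nonneg (k := k) hg0 hx
    positivity
  have hZd : ∀ x, HasDerivAt Z (-k * Z x + g x + k * η) x := fun x =>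
    ((((hasDerivAt_exp_neg k x).const_mul w).add (hasDerivAt_resp k hg x)).add_const η).congr_deriv
      (by simp only [hZ]; ring)
  refine Real.sqrt_le_iff.2 ⟨(hZpos t ht.1).le, ?_⟩
  refine image_le_of_deriv_right_lt_deriv_boundary (B := fun t => Z t ^ 2) hc hd ?_
    (fun x => (hZd x).pow 2) ?_ ht
  · simp only [hZ, resp_zero]
    simp only [mul_zero, Real.exp_zero, mul_one, add_zero]
    nlinarith
  · intro x hx hVx
    have h1 := hb x hx
    have h2 := hZpos x hx.1
    rw [hVx, Real.sqrt_sq h2.le] at h1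
    have h3 : 0 < Z x * (k * η) := by positivity
    norm_num
    nlinarith

/-! ### `L^p` estimates -/

/-- A consequence of Young's inequality with exponents `p` and `p / (p - 1)`, valid also for
`p = 1`. -/
lemma young_pointwise {p k h g : ℝ} (hp : 1 ≤ p) (hk : 0 < k) (hh : 0 ≤ h) (hg : 0 ≤ g) :
    p * h ^ (p - 1) * (-k * h + g) ≤ k * ((g / k) ^ p - h ^ p) := by
  have hp0 : 0 < p := by linarith
  have hu : 0 ≤ g / k := by positivity
  have h1 := Real.geom_mean_le_arith_mean2_weighted (w₁ := 1 / p) (w₂ := 1 - 1 / p)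
    (p₁ := (g / k) ^ p) (p₂ := h ^ p) (by positivity)
    (by rw [sub_nonneg, div_le_one hp0]; exact hp) (by positivity) (by positivity) (by ring)
  rw [← Real.rpow_mul hu, ← Real.rpow_mul hh, mul_one_div_cancel hp0.ne', Real.rpow_one,
    show p * (1 - 1 / p) = p - 1 by field_simp] at h1
  have h2 : h ^ (p - 1) * h = h ^ p := by
    rcases hh.eq_or_lt with rfl | h'
    · rw [mul_zero, Real.zero_rpow hp0.ne']
    · rw [← Real.rpow_add_one h'.ne']; congr 1; ring
  have h3 : p * h ^ (p - 1) * (-k * h + g) = k * (p * (g / k * h ^ (p - 1)) - p * h ^ p) := by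
    rw [← h2]; field_simp; ring
  rw [h3]
  have h4 : p * (g / k * h ^ (p - 1)) ≤ (g / k) ^ p + (p - 1) * h ^ p := by
    calc _ ≤ p * (1 / p * (g / k) ^ p + (1 - 1 / p) * h ^ p) := by gcongr
      _ = _ := by field_simp
  nlinarith

/-- `L^p` estimate for `z' = -k z + g`, obtained by integrating `(z ^ p)'` over `[0, τ]`. -/
lemma integral_rpow_le {p k τ : ℝ} (hp : 1 ≤ p) {z z' G : ℝ → ℝ} (hz' : Continuous z')
    (hG : Continuous G) (hτ : 0 ≤ τ) (hz : ∀ t, HasDerivAt z (z' t) t)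
    (hz0 : ∀ t ∈ Icc 0 τ, 0 ≤ z t)
    (hb : ∀ t ∈ Icc 0 τ, p * z t ^ (p - 1) * z' t ≤ G t - k * z t ^ p) :
    k * ∫ t in (0:ℝ)..τ, z t ^ p ≤ z 0 ^ p + ∫ t in (0:ℝ)..τ, G t := by
  have hzc : Continuous z := continuous_iff_continuousAt.2 fun t => (hz t).continuousAt
  have hc1 : Continuous fun t => z t ^ p := hzc.rpow_const fun t => Or.inr (by linarith)
  have hc2 : Continuous fun t => z t ^ (p - 1) := hzc.rpow_const fun t => Or.inr (by linarith)
  have hc3 : Continuous fun t => z' t * p * z t ^ (p - 1) := by fun_prop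
  have hftc := intervalIntegral.integral_eq_sub_of_hasDerivAt (a := 0) (b := τ)
    (fun t _ => (hz t).rpow_const (Or.inr hp)) (hc3.intervalIntegrable 0 τ)
  have hmono := intervalIntegral.integral_mono_on hτ (hc3.intervalIntegrable 0 τ)
    ((hG.sub (hc1.const_mul k)).intervalIntegrable (μ := volume) 0 τ)
    (fun t ht => by have := hb t ht; simp only [Pi.sub_apply]; linarith)
  rw [hftc] at hmono
  simp only [Pi.sub_apply] at hmono
  rw [intervalIntegral.integral_sub (hG.intervalIntegrable 0 τ)
    ((hc1.const_mul k).intervalIntegrable 0 τ), intervalIntegral.integral_const_mul] at hmono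
  have := Real.rpow_nonneg (hz0 τ ⟨hτ, le_rfl⟩) p
  linarith

/-- Minkowski's inequality on `[0, τ]` for continuous functions. -/
lemma minkowski {p τ : ℝ} (hp : 1 ≤ p) (hτ : 0 ≤ τ) {x h : ℝ → ℝ} (hx : Continuous x)
    (hh : Continuous h) :
    (∫ t in (0:ℝ)..τ, |x t + h t| ^ p) ^ (1 / p) ≤
      (∫ t in (0:ℝ)..τ, |x t| ^ p) ^ (1 / p) + (∫ t in (0:ℝ)..τ, |h t| ^ p) ^ (1 / p) := by
  have hp0 : 0 < p := by linarith
  have hmem : ∀ {φ : ℝ → ℝ}, Continuous φ →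
      MemLp φ (ENNReal.ofReal p) (volume.restrict (Ioc 0 τ)) := by
    intro φ hφ
    obtain ⟨C, hC⟩ := (isCompact_Icc (a := (0:ℝ)) (b := τ)).exists_bound_of_continuousOn
      hφ.continuousOn
    refine MemLp.of_bound hφ.aestronglyMeasurable C ?_
    exact (ae_restrict_iff' measurableSet_Ioc).2 (.of_forall fun t ht => hC t ⟨ht.1.le, ht.2⟩)
  have hnn : ∀ φ : ℝ → ℝ, 0 ≤ (∫ t in (0:ℝ)..τ, |φ t| ^ p) ^ (1 / p) := fun φ =>
    Real.rpow_nonneg (intervalIntegral.integral_nonneg hτ fun t _ => by positivity) _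
  have heq : ∀ {φ : ℝ → ℝ}, Continuous φ →
      eLpNorm φ (ENNReal.ofReal p) (volume.restrict (Ioc 0 τ)) =
        ENNReal.ofReal ((∫ t in (0:ℝ)..τ, |φ t| ^ p) ^ (1 / p)) := by
    intro φ hφ
    rw [(hmem hφ).eLpNorm_eq_integral_rpow_norm (by simpa using hp0) ENNReal.ofReal_ne_top,
      ENNReal.toReal_ofReal hp0.le, intervalIntegral.integral_of_le hτ, one_div]
    rfl
  have := eLpNorm_add_le (p := ENNReal.ofReal p) (μ := volume.restrict (Ioc 0 τ))
    hx.aestronglyMeasurable hh.aestronglyMeasurable (by simpa using hp)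
  rw [heq (hx.add hh), heq hx, heq hh, ← ENNReal.ofReal_add (hnn x) (hnn h)] at this
  exact (ENNReal.ofReal_le_ofReal_iff (add_nonneg (hnn x) (hnn h))).1 this

lemma eLp_trunc {n : ℕ} {p τ : ℝ} (hp : 1 ≤ p) (hτ : 0 ≤ τ) (g : ℝ → Fin n → ℝ) :
    eLp p (trunc τ g) = (∫ t in (0:ℝ)..τ, eNorm (g t) ^ p) ^ (1 / p) := by
  have hp0 : p ≠ 0 := by linarith
  have : (fun t => eNorm (trunc τ g t) ^ p) = (Iic τ).indicator fun t => eNorm (g t) ^ p := by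
    ext t
    by_cases h : t ≤ τ
    · simp [trunc, h]
    · simp [trunc, h, eNorm_zero, hp0]
  rw [eLp, this, setIntegral_indicator measurableSet_Iic, Ioi_inter_Iic,
    intervalIntegral.integral_of_le hτ]

/-- The `L^p` norm on `[0, τ]` of the variation-of-constants bound: Young's convolution bound
`‖h‖ ≤ ‖g‖ / k` for the forced part, and `‖w e^{-kt}‖ ≤ w (1 / (kp))^{1/p}` for the free part. -/
lemma Lp_bound {p k τ w : ℝ} (hp : 1 ≤ p) (hk : 0 < k) (hτ : 0 ≤ τ) (hw : 0 ≤ w) {g : ℝ → ℝ}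
    (hg : Continuous g) (hg0 : ∀ t, 0 ≤ g t) :
    (∫ t in (0:ℝ)..τ, (w * Real.exp (-k * t) + resp k g t) ^ p) ^ (1 / p) ≤
      1 / k * (∫ t in (0:ℝ)..τ, g t ^ p) ^ (1 / p) + w * (1 / (k * p)) ^ (1 / p) := by
  have hp0 : 0 < p := by linarith
  have hrc : Continuous (resp k g) :=
    continuous_iff_continuousAt.2 fun t => (hasDerivAt_resp k hg t).continuousAt
  have hxc : Continuous fun t => w * Real.exp (-k * t) := by fun_prop
  have hx0 : ∀ t, 0 ≤ w * Real.exp (-k * t) := fun t => by positivity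
  have hr0 : ∀ t ∈ Icc 0 τ, 0 ≤ resp k g t := fun t ht => resp_nonneg hg0 ht.1
  have hpow : ∀ {A B : ℝ}, 0 ≤ A → 0 ≤ B → ((A ^ p) * B) ^ (1 / p) = A * B ^ (1 / p) := by
    intro A B hA hB
    rw [Real.mul_rpow (by positivity) hB, ← Real.rpow_mul hA, mul_one_div_cancel hp0.ne',
      Real.rpow_one]
  have hgp : 0 ≤ ∫ t in (0:ℝ)..τ, g t ^ p :=
    intervalIntegral.integral_nonneg hτ fun t _ => Real.rpow_nonneg (hg0 t) _
  have hm := minkowski hp hτ hxc hrc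
  have habs : ∀ {φ : ℝ → ℝ}, (∀ t ∈ Icc 0 τ, 0 ≤ φ t) →
      ∫ t in (0:ℝ)..τ, |φ t| ^ p = ∫ t in (0:ℝ)..τ, φ t ^ p := by
    intro φ hφ
    refine intervalIntegral.integral_congr fun t ht => ?_
    rw [uIcc_of_le hτ] at ht
    simp only [abs_of_nonneg (hφ t ht)]
  rw [habs (fun t ht => add_nonneg (hx0 t) (hr0 t ht)), habs (fun t _ => hx0 t), habs hr0] at hm
  have h1 : ∫ t in (0:ℝ)..τ, resp k g t ^ p ≤ (1 / k) ^ p * ∫ t in (0:ℝ)..τ, g t ^ p := by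
    have hGc : Continuous fun t => g t ^ p := hg.rpow_const fun t => Or.inr hp0.le
    have := integral_rpow_le (k := k) hp (G := fun t => k * ((1 / k) ^ p * g t ^ p))
      (by fun_prop) (by fun_prop) hτ (fun t => hasDerivAt_resp k hg t) hr0 (fun t ht => by
        have h := young_pointwise hp hk (hr0 t ht) (hg0 t)
        rw [show g t / k = 1 / k * g t by ring, Real.mul_rpow (by positivity) (hg0 t)] at h
        linarith)
    rw [resp_zero, Real.zero_rpow hp0.ne', zero_add, intervalIntegral.integral_const_mul,
      intervalIntegral.integral_const_mul] at this
    exact le_of_mul_le_mul_left this hk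
  have h2 : ∫ t in (0:ℝ)..τ, (w * Real.exp (-k * t)) ^ p ≤ w ^ p * (1 / (k * p)) := by
    have := integral_rpow_le (k := k * p) hp (G := fun _ => 0) (z := fun t => w * Real.exp (-k * t))
      (z' := fun t => w * (-k * Real.exp (-k * t)))
      (by fun_prop) (by fun_prop) hτ (fun t => (hasDerivAt_exp_neg k t).const_mul w)
      (fun t _ => hx0 t) (fun t _ => by
        have h2 : (w * Real.exp (-k * t)) ^ (p - 1) * (w * Real.exp (-k * t)) =
            (w * Real.exp (-k * t)) ^ p := by
          rcases (hx0 t).eq_or_lt with h' | h'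
          · rw [← h', mul_zero, Real.zero_rpow hp0.ne']
          · rw [← Real.rpow_add_one h'.ne']; congr 1; ring
        rw [← h2]
        exact le_of_eq (by ring))
    simp only [mul_zero, Real.exp_zero, mul_one, intervalIntegral.integral_zero, add_zero] at this
    rw [mul_one_div, le_div_iff₀ (by positivity)]
    linarith
  refine hm.trans ?_
  rw [add_comm]
  refine add_le_add ?_ ?_
  · rw [← hpow (by positivity) hgp]
    exact Real.rpow_le_rpow (intervalIntegral.integral_nonneg hτ fun t ht =>
      Real.rpow_nonneg (hr0 t ht) _) h1 (by positivity)
  · rw [← hpow hw (by positivity)]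
    exact Real.rpow_le_rpow (intervalIntegral.integral_nonneg hτ fun t ht =>
      Real.rpow_nonneg (hx0 t) _) h2 (by positivity)

/-! ### The input–output bound -/

/-- **SOS-certified Lp input–output bound** (Theorem 3, case p ∈ [1, ∞)):
under the SOS certificate, initial-condition and small-signal hypotheses,
the truncated output y = a satisfies ‖y_τ‖_{Lp} ≤ γ_SOS‖f_τ‖_{Lp} + β_SOS with
γ_SOS = λmax‖2P_SOS‖/(λmin·ε) and β_SOS = ‖a₀‖√(λmax/λmin)·(2λmax/(εp))^{1/p}. -/
theorem sos_Lp_gain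
    {n : ℕ} (L : Matrix (Fin n) (Fin n) ℝ)
    (hHurwitz : ∀ z ∈ spectrum ℂ (L.map (algebraMap ℝ ℂ)), z.re < 0)
    (R : Fin n → Matrix (Fin n) (Fin n) ℝ) (hRsym : ∀ m, (R m)ᵀ = R m)
    (hloss : ∀ a : Fin n → ℝ, a ⬝ᵥ Ups R a = 0)
    (ε δ : ℝ) (hε : 0 < ε) (hδ : 0 < δ)
    (P : Matrix (Fin n) (Fin n) ℝ) (hPsym : Pᵀ = P)
    (Q : Matrix (Fin n) (Fin n) ℝ) (hQ : Q.PosSemidef)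
    (hSOS₁ : ∀ a : Fin n → ℝ, ε * (a ⬝ᵥ a) ≤ a ⬝ᵥ P.mulVec a)
    (hSOS₂ : ∀ a : Fin n → ℝ,
      2 * (a ⬝ᵥ P.mulVec (L.mulVec a + Ups R a)) + (δ ^ 2 - a ⬝ᵥ a) * (a ⬝ᵥ Q.mulVec a)
        + ε * (a ⬝ᵥ a) ≤ 0)
    (τ : ℝ) (hτ : 0 < τ)
    (a₀ : Fin n → ℝ) (ha₀ : eNorm a₀ ≤ δ * Real.sqrt (lamMin P / lamMax P))
    (f : ℝ → Fin n → ℝ) (hfc : Continuous f)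
    (hfsmall : ∀ t ∈ Icc (0:ℝ) τ,
      eNorm (f t) ≤ lamMin P * ε * δ / (lamMax P * specNorm ((2:ℝ) • P)))
    (a : ℝ → Fin n → ℝ)
    (hode : ∀ t ∈ Icc (0:ℝ) τ,
      HasDerivWithinAt a (L.mulVec (a t) + Ups R (a t) + f t) (Icc (0:ℝ) τ) t)
    (hinit : a 0 = a₀)
    (p : ℝ) (hp : 1 ≤ p) :
    eLp p (trunc τ a) ≤
      (lamMax P * specNorm ((2:ℝ) • P) / (lamMin P * ε)) * eLp p (trunc τ f)
        + eNorm a₀ * Real.sqrt (lamMax P / lamMin P) * (2 * lamMax P / (ε * p)) ^ (1/p) := by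
  have hp0 : 0 < p := by linarith
  -- In dimension zero every signal vanishes, so both sides are zero.
  rcases Nat.eq_zero_or_pos n with rfl | hn
  · have hz : ∀ v : Fin 0 → ℝ, eNorm v = 0 := fun v => by simp [eNorm]
    simp [eLp, hz, Real.zero_rpow hp0.ne', Real.zero_rpow (inv_ne_zero hp0.ne')]
  have hn0 : n ≠ 0 := hn.ne'
  have hc1 : 0 < lamMin P := hε.trans_le (le_lamMin hn0 P ε hSOS₁)
  have hc12 : lamMin P ≤ lamMax P := lamMin_le_lamMax hn0 P
  have hVlo := lamMin_mul_le P
  have hVhi := le_lamMax_mul P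
  have hb0 : 0 ≤ specNorm ((2:ℝ) • P) := specNorm_nonneg _
  have hbf : ∀ u v : Fin n → ℝ,
      2 * (u ⬝ᵥ P.mulVec v) ≤ specNorm ((2:ℝ) • P) * eNorm u * eNorm v := by
    intro u v
    have h1 := dot_le_eNorm u (((2:ℝ) • P).mulVec v)
    have h2 := mul_le_mul_of_nonneg_left (eNorm_mulVec_le ((2:ℝ) • P) v) (eNorm_nonneg u)
    rw [smul_mulVec, dotProduct_smul, smul_eq_mul] at h1
    rw [smul_mulVec] at h2
    linarith
  generalize specNorm ((2:ℝ) • P) = b at *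
  generalize lamMin P = c₁ at *
  generalize lamMax P = c₂ at *
  have hc2 : 0 < c₂ := hc1.trans_le hc12
  set V : ℝ → ℝ := fun t => a t ⬝ᵥ P.mulVec (a t) with hV
  set V' : ℝ → ℝ := fun t => 2 * (a t ⬝ᵥ P.mulVec (L.mulVec (a t) + Ups R (a t) + f t)) with hV'
  have hVd : ∀ t ∈ Icc 0 τ, HasDerivWithinAt V (V' t) (Icc 0 τ) t := fun t ht =>
    hasDerivWithinAt_quad hPsym (hode t ht)
  have hVc : ContinuousOn V (Icc 0 τ) := fun t ht => (hVd t ht).continuousWithinAt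
  have hVr : ∀ t ∈ Ico 0 τ, HasDerivWithinAt V (V' t) (Ici t) t := fun t ht =>
    (hVd t ⟨ht.1, ht.2.le⟩).mono_of_mem_nhdsWithin
      (Filter.mem_of_superset (Icc_mem_nhdsGE ht.2) (Icc_subset_Icc_left ht.1))
  have hV'le : ∀ t, V' t ≤ -ε * eNorm (a t) ^ 2 + b * eNorm (a t) * eNorm (f t)
      + (eNorm (a t) ^ 2 - δ ^ 2) * (a t ⬝ᵥ Q.mulVec (a t)) := by
    intro t
    have h1 := hSOS₂ (a t)
    have h2 := hbf (a t) (f t)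
    rw [dot_self_eq] at h1
    simp only [hV']
    rw [mulVec_add P (L.mulVec (a t) + Ups R (a t)), dotProduct_add]
    linarith
  have hq0 : ∀ v : Fin n → ℝ, 0 ≤ v ⬝ᵥ Q.mulVec v := fun v => by
    simpa using hQ.dotProduct_mulVec_nonneg v
  have hac : ContinuousOn a (Icc 0 τ) := fun t ht => (hode t ht).continuousWithinAt
  -- `V` starts in the sublevel set `{V ≤ c₁δ²}`, which lies in the ball of radius `δ`.
  have hV0 : V 0 ≤ c₁ * δ ^ 2 := by
    have h1 := hVhi a₀
    have h2 : eNorm a₀ ^ 2 ≤ (δ * Real.sqrt (c₁ / c₂)) ^ 2 :=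
      pow_le_pow_left₀ (eNorm_nonneg _) ha₀ 2
    rw [mul_pow, Real.sq_sqrt (by positivity)] at h2
    have h3 := mul_le_mul_of_nonneg_left h2 hc2.le
    simp only [hV, hinit]
    calc _ ≤ _ := h1
      _ ≤ _ := h3
      _ = _ := by field_simp
  -- This sublevel set is forward invariant, including from its boundary.
  have hinv : ∀ t ∈ Icc 0 τ, V t - c₁ * δ ^ 2 ≤ 0 := by
    obtain ⟨K, hK⟩ := isCompact_Icc.exists_bound_of_continuousOn
      ((continuous_quad Q).comp_continuousOn hac)
    refine nonpos_of_deriv_le (K := K / c₁) (hVc.sub continuousOn_const)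
      (fun t ht => (hVr t ht).sub_const _) (by linarith) ?_
    intro t ht hpos
    have htI : t ∈ Icc 0 τ := ⟨ht.1, ht.2.le⟩
    have hqK : a t ⬝ᵥ Q.mulVec (a t) ≤ K := (le_abs_self _).trans (hK t htI)
    have hN := eNorm_nonneg (a t)
    have h1 := hV'le t
    have h2 : c₁ * eNorm (a t) ^ 2 ≤ V t := hVlo (a t)
    have h3 : V t ≤ c₂ * eNorm (a t) ^ 2 := hVhi (a t)
    have hbF : b * eNorm (f t) ≤ c₁ / c₂ * (ε * δ) := by
      rcases hb0.eq_or_lt with rfl | hb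
      · rw [zero_mul]; positivity
      · calc _ ≤ b * (c₁ * ε * δ / (c₂ * b)) := by gcongr; exact hfsmall t htI
          _ = _ := by field_simp
    have hNlo : c₁ / c₂ * δ ≤ eNorm (a t) := by
      refine le_of_sq_le_sq ?_ hN
      have hr : c₁ / c₂ ≤ 1 := (div_le_one hc2).2 hc12
      have hr0 : 0 < c₁ / c₂ := by positivity
      have h4 : c₁ / c₂ * δ ^ 2 ≤ eNorm (a t) ^ 2 := by
        rw [div_mul_eq_mul_div, div_le_iff₀ hc2]; linarith
      calc (c₁ / c₂ * δ) ^ 2 = c₁ / c₂ * (c₁ / c₂ * δ ^ 2) := by ring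
        _ ≤ 1 * (c₁ / c₂ * δ ^ 2) := by gcongr
        _ ≤ _ := by linarith
    have h5 : b * eNorm (a t) * eNorm (f t) ≤ ε * eNorm (a t) ^ 2 := by
      have : b * eNorm (f t) ≤ ε * eNorm (a t) := by nlinarith
      nlinarith
    have h6 : eNorm (a t) ^ 2 - δ ^ 2 ≤ (V t - c₁ * δ ^ 2) / c₁ := by
      rw [le_div_iff₀ hc1]; linarith
    have h7 : (eNorm (a t) ^ 2 - δ ^ 2) * (a t ⬝ᵥ Q.mulVec (a t)) ≤
        K / c₁ * (V t - c₁ * δ ^ 2) :=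
      calc _ ≤ (V t - c₁ * δ ^ 2) / c₁ * (a t ⬝ᵥ Q.mulVec (a t)) :=
            mul_le_mul_of_nonneg_right h6 (hq0 _)
        _ ≤ (V t - c₁ * δ ^ 2) / c₁ * K := by gcongr
        _ = _ := by ring
    linarith
  have hs1 : 0 < Real.sqrt c₁ := Real.sqrt_pos.2 hc1
  have hNs : ∀ t, Real.sqrt c₁ * eNorm (a t) ≤ Real.sqrt (V t) := by
    intro t
    rw [← Real.sqrt_sq (eNorm_nonneg (a t)), ← Real.sqrt_mul hc1.le]
    exact Real.sqrt_le_sqrt (hVlo (a t))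
  set k : ℝ := ε / (2 * c₂) with hk
  have hk0 : 0 < k := by positivity
  set m : ℝ := b / (2 * Real.sqrt c₁) with hm
  have hm0 : 0 ≤ m := by positivity
  set w : ℝ := Real.sqrt c₂ * eNorm a₀ with hw
  have hw0 : 0 ≤ w := mul_nonneg (Real.sqrt_nonneg _) (eNorm_nonneg _)
  have hfn : Continuous fun t => eNorm (f t) := continuous_eNorm.comp hfc
  have hg : Continuous fun t => m * eNorm (f t) := by fun_prop
  have hg0 : ∀ t, 0 ≤ m * eNorm (f t) := fun t => mul_nonneg hm0 (eNorm_nonneg _)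
  -- Inside the ball the `Q`-term has the right sign, giving `V' ≤ -2kV + 2g√V`.
  have hdecay := sqrt_le_of_deriv_le (τ := τ) hk0 hw0 hg hg0 hVc hVr
    (by
      rw [hw, mul_pow, Real.sq_sqrt hc2.le]
      simpa only [hV, hinit] using hVhi a₀)
    (by
      intro t ht
      have htI : t ∈ Icc 0 τ := ⟨ht.1, ht.2.le⟩
      have h1 := hV'le t
      have h2 : c₁ * eNorm (a t) ^ 2 ≤ V t := hVlo (a t)
      have h3 : V t ≤ c₂ * eNorm (a t) ^ 2 := hVhi (a t)
      have h4 : eNorm (a t) ^ 2 - δ ^ 2 ≤ 0 := by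
        have := hinv t htI
        nlinarith
      have h5 := mul_nonpos_of_nonpos_of_nonneg h4 (hq0 (a t))
      have h6 : 2 * k * V t ≤ ε * eNorm (a t) ^ 2 :=
        calc 2 * k * V t ≤ 2 * k * (c₂ * eNorm (a t) ^ 2) := by gcongr
          _ = _ := by rw [hk]; field_simp
      have h7 : b * eNorm (a t) * eNorm (f t) ≤ 2 * (m * eNorm (f t)) * Real.sqrt (V t) :=
        calc b * eNorm (a t) * eNorm (f t)
            = 2 * (m * eNorm (f t)) * (Real.sqrt c₁ * eNorm (a t)) := by
              rw [hm]; field_simp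
          _ ≤ _ := mul_le_mul_of_nonneg_left (hNs t) (by have := hg0 t; linarith)
      linarith)
  have hLp := Lp_bound hp hk0 hτ.le hw0 hg hg0
  have hpull : ∀ (c : ℝ) (φ : ℝ → ℝ), 0 ≤ c → (∀ t, 0 ≤ φ t) →
      (∫ t in (0:ℝ)..τ, (c * φ t) ^ p) ^ (1 / p) = c * (∫ t in (0:ℝ)..τ, φ t ^ p) ^ (1 / p) := by
    intro c φ hc hφ
    simp only [Real.mul_rpow hc (hφ _)]
    rw [intervalIntegral.integral_const_mul, Real.mul_rpow (by positivity)
      (intervalIntegral.integral_nonneg hτ.le fun t _ => Real.rpow_nonneg (hφ t) _),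
      ← Real.rpow_mul hc, mul_one_div_cancel hp0.ne', Real.rpow_one]
  have hmono : (∫ t in (0:ℝ)..τ, (Real.sqrt c₁ * eNorm (a t)) ^ p) ^ (1 / p) ≤
      (∫ t in (0:ℝ)..τ, (w * Real.exp (-k * t) + resp k (fun t => m * eNorm (f t)) t) ^ p)
        ^ (1 / p) := by
    have hsN : ∀ t, 0 ≤ Real.sqrt c₁ * eNorm (a t) := fun t => mul_nonneg hs1.le (eNorm_nonneg _)
    have hrc : Continuous (resp k fun t => m * eNorm (f t)) :=
      continuous_iff_continuousAt.2 fun t => (hasDerivAt_resp k hg t).continuousAt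
    refine Real.rpow_le_rpow (intervalIntegral.integral_nonneg hτ.le fun t _ =>
      Real.rpow_nonneg (hsN t) _) ?_ (by positivity)
    refine intervalIntegral.integral_mono_on hτ.le ?_ ?_ fun t ht =>
      Real.rpow_le_rpow (hsN t) ((hNs t).trans (hdecay t ht)) hp0.le
    · refine ContinuousOn.intervalIntegrable ?_
      rw [uIcc_of_le hτ.le]
      exact (continuousOn_const.mul (continuous_eNorm.comp_continuousOn hac)).rpow_const
        fun t _ => Or.inr hp0.le
    · refine Continuous.intervalIntegrable ?_ _ _
      exact Continuous.rpow_const (by fun_prop) fun t => Or.inr hp0.le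
  rw [hpull _ _ hs1.le fun t => eNorm_nonneg _] at hmono
  rw [hpull _ _ hm0 fun t => eNorm_nonneg _] at hLp
  rw [eLp_trunc hp hτ.le, eLp_trunc hp hτ.le]
  have hfin := hmono.trans hLp
  generalize (∫ t in (0:ℝ)..τ, eNorm (a t) ^ p) ^ (1 / p) = A at *
  generalize (∫ t in (0:ℝ)..τ, eNorm (f t) ^ p) ^ (1 / p) = F at *
  have hbeta : 1 / (k * p) = 2 * c₂ / (ε * p) := by rw [hk]; field_simp
  rw [hbeta] at hfin
  generalize (2 * c₂ / (ε * p)) ^ (1 / p) = B at *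
  rw [Real.sqrt_div hc2.le]
  have hA : A ≤ (1 / k * (m * F) + w * B) / Real.sqrt c₁ := by
    rw [le_div_iff₀ hs1]; linarith
  refine hA.trans (le_of_eq ?_)
  have hsq : c₁ = Real.sqrt c₁ ^ 2 := (Real.sq_sqrt hc1.le).symm
  rw [hw, hm, hk]
  conv_rhs => rw [hsq, Real.sqrt_sq hs1.le]
  field_simp
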